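/- Let P[1..m] and S[1..m] be strings over linearly ordered alphabets and let 1 ≤ q ≤ m. If PP_P(i) = PP_S(i) for all 1 ≤ i ≤ q, then PC_P(i) = PC_S(i) for all 1 ≤ i ≤ q. (The prefix-parent representation of a prefix determines its prefix-child representation; used in the proof of Theorem 1.) -/

import Mathlib

/-!
`PP` does not determine the order `≺` on a prefix, but it does determine the `≺`-minimum of every
interval of positions. A position `k` of an interval `F` is the `≺`-minimum exactly when no
position of `F` to the left of `k` is the prefix-parent of `k`, and every position of `F` to the
right of `k` has a prefix-parent (different from itself) that is at least `k`: following
prefix-parents from such a position descends in `≺` and must end at `k`. This criterion mentions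
only `PP`, so minimality transfers from `P` to `S` (`min_transfer`), and `PC` is, in each of its
cases, either a fixed position or the minimum of an interval cut out by `PP`.
-/

namespace CTM

variable {α : Type*} [LinearOrder α] {n : ℕ}

/-- `S[i] ≺ S[j]`: strict order on positions, values compared first, ties broken
toward the smaller index. -/
def prec (S : Fin n → α) (i j : Fin n) : Prop :=
  S i < S j ∨ (S i = S j ∧ i < j)

instance (S : Fin n → α) (i j : Fin n) : Decidable (prec S i j) :=
  inferInstanceAs (Decidable (_ ∨ _))

/-- `S[i] ⪯ S[j]`. -/
def preceq (S : Fin n → α) (i j : Fin n) : Prop :=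
  i = j ∨ prec S i j

/-- The set `{j : j < i and S[j] ≺ S[i]}`. -/
def PPset (S : Fin n → α) (i : Fin n) : Finset (Fin n) :=
  Finset.univ.filter (fun j => j < i ∧ prec S j i)

/-- Prefix-parent representation. -/
def PP (S : Fin n → α) (i : Fin n) : Fin n :=
  if h : (PPset S i).Nonempty then (PPset S i).max' h else i

lemma PP_le (S : Fin n → α) (i : Fin n) : PP S i ≤ i := by
  unfold PP
  split
  · next h =>
      have hm := (PPset S i).max'_mem h
      simp only [PPset, Finset.mem_filter] at hm
      exact le_of_lt hm.2.1
  · exact le_refl i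

/-- The ≺-minimum position of a nonempty finite set of positions. -/
noncomputable def minPos (S : Fin n → α) (F : Finset (Fin n)) (h : F.Nonempty) : Fin n :=
  (F.exists_min_image (fun j => toLex (S j, j)) h).choose

lemma minPos_mem (S : Fin n → α) (F : Finset (Fin n)) (h : F.Nonempty) :
    minPos S F h ∈ F :=
  (F.exists_min_image (fun j => toLex (S j, j)) h).choose_spec.1

/-- Prefix-child representation (0-indexed: position `0` is the first position). -/
noncomputable def PC (S : Fin n → α) (i : Fin n) : Fin n :=
  if h0 : i.val = 0 then i
  else if h1 : PP S i = i then
    minPos S (Finset.univ.filter (fun j => j < i))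
      ⟨⟨0, i.pos⟩, Finset.mem_filter.mpr ⟨Finset.mem_univ _, by
        simp only [Fin.lt_def]; omega⟩⟩
  else if _h2 : (PP S i).val + 1 = i.val then i
  else
    minPos S (Finset.univ.filter (fun j => PP S i < j ∧ j < i))
      ⟨⟨(PP S i).val + 1, by
          have h3 : (PP S i).val < i.val := Fin.lt_def.mp (lt_of_le_of_ne (PP_le S i) h1)
          have h4 := i.isLt
          omega⟩,
        Finset.mem_filter.mpr ⟨Finset.mem_univ _, by
          have h3 : (PP S i).val < i.val := Fin.lt_def.mp (lt_of_le_of_ne (PP_le S i) h1)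
          constructor <;> simp only [Fin.lt_def] <;> omega⟩⟩

/-- Global-parent representation. -/
noncomputable def GP (S : Fin n → α) (i : Fin n) : Fin n :=
  if h : ∃ j, i < j ∧ PC S j = i then h.choose else PP S i

/-- Binary trees whose nodes are positions of a string of length `n`. -/
inductive PosTree (n : ℕ) where
  | nil : PosTree n
  | node : Fin n → PosTree n → PosTree n → PosTree n

/-- The Cartesian tree of the restriction of `S` to a finite set of positions. -/
noncomputable def CTAux (S : Fin n → α) (F : Finset (Fin n)) : PosTree n :=
  if h : F.Nonempty then
    PosTree.node (minPos S F h)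
      (CTAux S (F.filter (fun j => j < minPos S F h)))
      (CTAux S (F.filter (fun j => minPos S F h < j)))
  else PosTree.nil
termination_by F.card
decreasing_by
  · exact Finset.card_lt_card
      (Finset.filter_ssubset.mpr ⟨minPos S F h, minPos_mem S F h, by simp⟩)
  · exact Finset.card_lt_card
      (Finset.filter_ssubset.mpr ⟨minPos S F h, minPos_mem S F h, by simp⟩)

/-- The Cartesian tree of a string, as a binary tree on positions. -/
noncomputable def CT (S : Fin n → α) : PosTree n :=
  CTAux S Finset.univ

/-- Parent-distance representation. -/
def PD (S : Fin n → α) (i : Fin n) : ℕ :=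
  if h : (PPset S i).Nonempty then i.val - ((PPset S i).max' h).val else 0

lemma mem_PPset {S : Fin n → α} {i j : Fin n} :
    j ∈ PPset S i ↔ j < i ∧ (S j < S i ∨ S j = S i ∧ j < i) :=
  Finset.mem_filter.trans (and_iff_right (Finset.mem_univ _))

lemma le_PP {S : Fin n → α} {i j : Fin n} (hji : j < i) (h : S j ≤ S i) :
    j ≤ PP S i ∧ PP S i < i := by
  have hj : j ∈ PPset S i := by
    rcases h.lt_or_eq with h | h <;> simp [mem_PPset, h, hji]
  have hne : (PPset S i).Nonempty := ⟨j, hj⟩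
  have hm := mem_PPset.mp ((PPset S i).max'_mem hne)
  unfold PP
  rw [dif_pos hne]
  exact ⟨Finset.le_max' _ _ hj, hm.1⟩

lemma apply_PP_le (S : Fin n → α) (i : Fin n) : S (PP S i) ≤ S i := by
  unfold PP
  split
  · next h =>
    rcases (mem_PPset.mp ((PPset S i).max'_mem h)).2 with h | h
    · exact h.le
    · exact h.1.le
  · exact le_rfl

lemma minPos_le (S : Fin n → α) (F : Finset (Fin n)) (h : F.Nonempty) {j : Fin n} (hj : j ∈ F) :
    toLex (S (minPos S F h), minPos S F h) ≤ toLex (S j, j) :=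
  (F.exists_min_image (fun j => toLex (S j, j)) h).choose_spec.2 j hj

/-- Two strings with the same prefix-parents on an interval `F` have the same `≺`-minimum there. -/
lemma min_transfer {β : Type*} [LinearOrder β] {P : Fin n → α} {S : Fin n → β}
    {F : Finset (Fin n)} (hF : (F : Set (Fin n)).OrdConnected)
    (hpp : ∀ i ∈ F, PP P i = PP S i) {k : Fin n} (hk : k ∈ F)
    (hmin : ∀ j ∈ F, toLex (P k, k) ≤ toLex (P j, j)) :
    ∀ j ∈ F, toLex (S k, k) ≤ toLex (S j, j) := by
  intro j
  induction j using WellFoundedLT.induction with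
  | ind j ih =>
  intro hj
  rcases lt_trichotomy j k with hjk | rfl | hkj
  · rw [Prod.Lex.toLex_le_toLex]
    left
    by_contra! hS
    -- The prefix-parent of `k` would lie in `[j, k)`, hence in `F`, and precede `k` in `P`.
    obtain ⟨h1, h2⟩ := le_PP hjk hS
    rw [← hpp k hk] at h1 h2
    have h3 := hmin _ (hF.out hj hk ⟨h1, h2.le⟩)
    rw [Prod.Lex.toLex_le_toLex] at h3
    rcases h3 with h3 | h3
    · exact absurd (apply_PP_le P k) (not_le.mpr h3)
    · exact absurd h2 (not_lt.mpr h3.2)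
  · exact le_rfl
  · have hP : P k ≤ P j := by
      have h3 := hmin j hj
      rw [Prod.Lex.toLex_le_toLex] at h3
      rcases h3 with h3 | h3
      · exact h3.le
      · exact h3.1.le
    obtain ⟨h1, h2⟩ := le_PP hkj hP
    rw [hpp j hj] at h1 h2
    refine (ih _ h2 (hF.out hk hj ⟨h1, h2.le⟩)).trans ?_
    rw [Prod.Lex.toLex_le_toLex]
    rcases (apply_PP_le S j).lt_or_eq with h | h
    · exact Or.inl h
    · exact Or.inr ⟨h, h2.le⟩

lemma minPos_eq_of_PP_eq {β : Type*} [LinearOrder β] {P : Fin n → α} {S : Fin n → β}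
    {F G : Finset (Fin n)} (hFG : F = G) (hF : (F : Set (Fin n)).OrdConnected)
    (hpp : ∀ i ∈ F, PP P i = PP S i) (h : F.Nonempty) (h' : G.Nonempty) :
    minPos P F h = minPos S G h' := by
  subst hFG
  have h1 := min_transfer hF hpp (minPos_mem P F h) (fun j hj => minPos_le P F h hj)
    _ (minPos_mem S F h)
  have h2 := minPos_le S F h (minPos_mem P F h)
  exact congrArg (fun x => (ofLex x).2) (le_antisymm h1 h2)

/-- The prefix-parent representation of a prefix determines its prefix-child
representation (used in the proof of Theorem 1). -/
theorem pc_determined {β : Type*} [LinearOrder β] (m : ℕ)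
    (P : Fin m → α) (S : Fin m → β) (q : Fin m)
    (hpp : ∀ i ≤ q, PP P i = PP S i) :
    ∀ i ≤ q, PC P i = PC S i := by
  intro i hi
  have e := hpp i hi
  unfold PC
  split_ifs with h0 h1 h2 h3 h4 h5 h6
  any_goals rfl
  any_goals (exfalso; simp_all; done)
  · refine minPos_eq_of_PP_eq rfl ⟨fun a _ b hb c hc => ?_⟩
      (fun j hj => hpp j ((Finset.mem_filter.mp hj).2.le.trans hi)) _ _
    simp only [Finset.coe_filter, Finset.mem_univ, true_and, Set.mem_ofPred_eq] at *
    exact hc.2.trans_lt hb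
  · refine minPos_eq_of_PP_eq (by rw [e]) ⟨fun a ha b hb c hc => ?_⟩
      (fun j hj => hpp j ((Finset.mem_filter.mp hj).2.2.le.trans hi)) _ _
    simp only [Finset.coe_filter, Finset.mem_univ, true_and, Set.mem_ofPred_eq] at *
    exact ⟨ha.1.trans_le hc.1, hc.2.trans_lt hb.2⟩

end CTM
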